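/- Let 0 < γ < 2. For ε > 0 define λ̄^ε_γ(F) := sup{μ ∈ ℝ : there exists u continuous on [0,1), C² on (0,1), with u > 0 on [0,1) and F(D(u''(r), u'(r)/r)) + μ·u(r)·(r²+ε²)^{−γ/2} ≤ 0 for all r ∈ (0,1)}, and for δ ∈ (0,1) define λ̄_{γ,δ}(F) := sup{μ ∈ ℝ : there exists a C² function u : (δ,1) → ℝ with u > 0 on (δ,1) and F(D(u''(r), u'(r)/r)) + μ·u(r)·r^{−γ} ≤ 0 for all r ∈ (δ,1)}. Then λ̄'_γ(F) = lim_{ε→0⁺} λ̄^ε_γ(F) and λ̄'_γ(F) = lim_{δ→0⁺} λ̄_{γ,δ}(F). -/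

import Mathlib

open Set Real Filter MeasureTheory Matrix

noncomputable section

/-- The `N × N` diagonal matrix with first diagonal entry `a` and the remaining
`N - 1` diagonal entries equal to `b`. -/
def Dmat (N : ℕ) (a b : ℝ) : Matrix (Fin N) (Fin N) ℝ :=
  Matrix.diagonal (fun i => if (i : ℕ) = 0 then a else b)

/-- Uniform ellipticity with constants `0 < lam ≤ Lam`. -/
def UnifElliptic (N : ℕ) (lam Lam : ℝ) (F : Matrix (Fin N) (Fin N) ℝ → ℝ) : Prop :=
  ∀ M P : Matrix (Fin N) (Fin N) ℝ, M.IsSymm → P.PosSemidef →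
    lam * P.trace ≤ F (M + P) - F M ∧ F (M + P) - F M ≤ Lam * P.trace

/-- Rotation invariance. -/
def RotInvariant (N : ℕ) (F : Matrix (Fin N) (Fin N) ℝ → ℝ) : Prop :=
  ∀ O M : Matrix (Fin N) (Fin N) ℝ, Oᵀ * O = 1 → F (Oᵀ * M * O) = F M

/-- Positive one-homogeneity. -/
def PosHomog (N : ℕ) (F : Matrix (Fin N) (Fin N) ℝ → ℝ) : Prop :=
  ∀ t : ℝ, 0 < t → ∀ M : Matrix (Fin N) (Fin N) ℝ, F (t • M) = t * F M

/-- The radial principal eigenvalue `λ̄'_γ(F)` on the punctured unit ball. -/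
def radialEV (N : ℕ) (F : Matrix (Fin N) (Fin N) ℝ → ℝ) (γ : ℝ) : ℝ :=
  sSup {μ : ℝ | ∃ u : ℝ → ℝ, ContDiffOn ℝ 2 u (Ioo 0 1) ∧
    (∀ r ∈ Ioo (0:ℝ) 1, 0 < u r) ∧
    (∀ r ∈ Ioo (0:ℝ) 1,
      F (Dmat N (deriv (deriv u) r) (deriv u r / r)) + μ * u r * r ^ (-γ) ≤ 0)}


/-- The regularized eigenvalue `λ̄^ε_γ(F)`, where the singular potential `r^{-γ}` is
replaced by `(r² + ε²)^{-γ/2}`. -/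
def epsEV (N : ℕ) (F : Matrix (Fin N) (Fin N) ℝ → ℝ) (γ ε : ℝ) : ℝ :=
  sSup {μ : ℝ | ∃ u : ℝ → ℝ, ContinuousOn u (Ico 0 1) ∧ ContDiffOn ℝ 2 u (Ioo 0 1) ∧
    (∀ r ∈ Ico (0:ℝ) 1, 0 < u r) ∧
    (∀ r ∈ Ioo (0:ℝ) 1,
      F (Dmat N (deriv (deriv u) r) (deriv u r / r))
        + μ * u r * (r ^ 2 + ε ^ 2) ^ (-(γ / 2)) ≤ 0)}

/-- The eigenvalue `λ̄_{γ,δ}(F)` on the annulus `δ < r < 1`. -/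
def deltaEV (N : ℕ) (F : Matrix (Fin N) (Fin N) ℝ → ℝ) (γ δ : ℝ) : ℝ :=
  sSup {μ : ℝ | ∃ u : ℝ → ℝ, ContDiffOn ℝ 2 u (Ioo δ 1) ∧
    (∀ r ∈ Ioo δ 1, 0 < u r) ∧
    (∀ r ∈ Ioo δ 1,
      F (Dmat N (deriv (deriv u) r) (deriv u r / r)) + μ * u r * r ^ (-γ) ≤ 0)}


structure GE (G : ℝ → ℝ → ℝ) (l L n : ℝ) : Prop where
  hl : 0 < l
  hlL : l ≤ L
  hn : L < l * n
  m1 : ∀ a b x, 0 ≤ x → l * x ≤ G (a + x) b - G a b ∧ G (a + x) b - G a b ≤ L * x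
  m2 : ∀ a b x, 0 ≤ x → l * n * x ≤ G a (b + x) - G a b ∧ G a (b + x) - G a b ≤ L * n * x
  hom : ∀ t a b, 0 < t → G (t * a) (t * b) = t * G a b
  z : G 0 0 = 0

lemma GE.npos {G l L n} (h : GE G l L n) : 0 < n := by
  have := h.hl; have := h.hlL; have := h.hn
  by_contra hc
  nlinarith

lemma GE.lip {G l L n} (h : GE G l L n) (a b a' b' : ℝ) :
    G a b ≤ G a' b' + L * |a - a'| + L * n * |b - b'| := by
  have hL : 0 < L := lt_of_lt_of_le h.hl h.hlL
  have hn := h.npos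
  have hl := h.hl
  have h1 : G a b ≤ G a' b + L * |a - a'| := by
    rcases le_total a' a with hh | hh
    · have := (h.m1 a' b (a - a') (by linarith)).2
      rw [abs_of_nonneg (by linarith)]; rw [add_sub_cancel] at this; linarith
    · have := (h.m1 a b (a' - a) (by linarith)).1
      rw [add_sub_cancel] at this
      have h3 : 0 ≤ l * (a' - a) := mul_nonneg hl.le (by linarith)
      have h4 : 0 ≤ L * |a - a'| := by positivity
      linarith
  have h2 : G a' b ≤ G a' b' + L * n * |b - b'| := by
    rcases le_total b' b with hh | hh
    · have := (h.m2 a' b' (b - b') (by linarith)).2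
      rw [abs_of_nonneg (by linarith)]; rw [add_sub_cancel] at this; linarith
    · have := (h.m2 a' b (b' - b) (by linarith)).1
      rw [add_sub_cancel] at this
      have h3 : 0 ≤ l * n * (b' - b) := mul_nonneg (by positivity) (by linarith)
      have h4 : 0 ≤ L * n * |b - b'| := by positivity
      linarith
  linarith

def Ric (G : ℝ → ℝ → ℝ) (γ μ a : ℝ) (q : ℝ → ℝ) : Prop :=
  ContDiffOn ℝ 1 q (Ioo a 1) ∧
    ∀ r ∈ Ioo a 1, G (deriv q r + q r ^ 2) (q r / r) ≤ -μ * r ^ (-γ)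

lemma Ric.hasDeriv {G γ μ a q} (h : Ric G γ μ a q) {r : ℝ} (hr : r ∈ Ioo a 1) :
    HasDerivAt q (deriv q r) r :=
  ((h.1.differentiableOn (by norm_num)).differentiableAt (isOpen_Ioo.mem_nhds hr)).hasDerivAt

lemma toRic {G l L n} (hG : GE G l L n) {γ μ a : ℝ} {u : ℝ → ℝ}
    (hu : ContDiffOn ℝ 2 u (Ioo a 1)) (hp : ∀ r ∈ Ioo a 1, 0 < u r)
    (hi : ∀ r ∈ Ioo a 1, G (deriv (deriv u) r) (deriv u r / r) + μ * u r * r ^ (-γ) ≤ 0) :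
    ∃ q, Ric G γ μ a q := by
  have h1 : ContDiffOn ℝ 1 (deriv u) (Ioo a 1) :=
    ((contDiffOn_succ_iff_deriv_of_isOpen (n := 1) isOpen_Ioo).1 (by norm_num; exact hu)).2.2
  refine ⟨fun r => deriv u r / u r, ?_, ?_⟩
  · exact h1.div (hu.of_le (by norm_num)) fun r hr => (hp r hr).ne'
  · intro r hr
    have d0 : HasDerivAt u (deriv u r) r :=
      ((hu.differentiableOn (by norm_num)).differentiableAt (isOpen_Ioo.mem_nhds hr)).hasDerivAt
    have d1 : HasDerivAt (deriv u) (deriv (deriv u) r) r :=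
      ((h1.differentiableOn (by norm_num)).differentiableAt (isOpen_Ioo.mem_nhds hr)).hasDerivAt
    have hpr := hp r hr
    have d2 := (d1.div d0 hpr.ne').deriv
    have e : deriv (fun r => deriv u r / u r) r + (deriv u r / u r) ^ 2
        = (u r)⁻¹ * deriv (deriv u) r := by
      have : deriv (fun r => deriv u r / u r) r = _ := d2
      rw [this]; field_simp; ring
    have e2 : deriv u r / u r / r = (u r)⁻¹ * (deriv u r / r) := by
      field_simp
    simp only []
    rw [e, e2, hG.hom _ _ _ (inv_pos.2 hpr)]
    have := hi r hr
    rw [inv_mul_le_iff₀ hpr]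
    linarith

lemma anti_aux {f f' : ℝ → ℝ} {a b : ℝ} (hd : ∀ x ∈ Ioo a b, HasDerivAt f (f' x) x)
    (hn : ∀ x ∈ Ioo a b, f' x ≤ 0) {x y : ℝ} (hx : a < x) (hxy : x ≤ y) (hy : y < b) :
    f y ≤ f x := by
  have : AntitoneOn f (Ioo a b) := by
    apply antitoneOn_of_deriv_nonpos (convex_Ioo a b)
    · exact fun x hx => (hd x hx).continuousAt.continuousWithinAt
    · rw [interior_Ioo]
      exact fun x hx => (hd x hx).differentiableAt.differentiableWithinAt
    · rw [interior_Ioo]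
      intro x hx
      rw [(hd x hx).deriv]; exact hn x hx
  exact this ⟨hx, lt_of_le_of_lt hxy hy⟩ ⟨lt_of_lt_of_le hx hxy, hy⟩ hxy

/-- boundedness -/
lemma Ric.bound {G l L n} (hG : GE G l L n) {γ μ : ℝ} {q : ℝ → ℝ} (hγ : 0 < γ) (hμ : 0 ≤ μ)
    (h : Ric G γ μ (1/2) q) : μ ≤ L * (128 + (2 * L * n / l) ^ 2 / 2) := by
  by_contra hc
  push Not at hc
  have hl := hG.hl
  have hlL := hG.hlL
  have hL : 0 < L := lt_of_lt_of_le hG.hl hG.hlL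
  have hn := hG.npos
  set B := 2 * L * n / l with hB
  have hc' : 128 + B ^ 2 / 2 < μ / L := by
    rw [lt_div_iff₀ hL]; linarith
  have key : ∀ r ∈ Ioo (1/2 : ℝ) 1, deriv q r ≤ -(q r ^ 2 / 2) - 128 := by
    intro r hr
    have hr0 : 0 < r := by linarith [hr.1]
    have hi := h.2 r hr
    have h1 : (1:ℝ) ≤ r ^ (-γ) :=
      one_le_rpow_of_pos_of_le_one_of_nonpos hr0 hr.2.le (by linarith)
    set a := deriv q r + q r ^ 2 with ha
    have h2 := hG.lip a 0 a (q r / r)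
    have h3 : |0 - q r / r| ≤ 2 * |q r| := by
      rw [zero_sub, abs_neg, abs_div, abs_of_pos hr0, div_le_iff₀ hr0]
      nlinarith [abs_nonneg (q r), hr.1]
    have h4 : L * n * |0 - q r / r| ≤ L * n * (2 * |q r|) := by gcongr
    rw [sub_self, abs_zero, mul_zero, add_zero] at h2
    have h5 : G a 0 ≤ -μ + l * (B * |q r|) := by
      have : l * (B * |q r|) = L * n * (2 * |q r|) := by
        rw [hB]; field_simp
      rw [this]
      nlinarith
    have h6 : a ≤ -(μ / L) + B * |q r| := by
      have hBq : 0 ≤ B * |q r| := by positivity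
      have hmL : L * (μ / L) = μ := by field_simp
      have hmL0 : 0 ≤ μ / L := by positivity
      rcases le_total 0 a with h0 | h0
      · have := (hG.m1 0 0 a h0).1
        rw [zero_add, hG.z, sub_zero] at this
        have : l * a ≤ l * (-(μ / L) + B * |q r|) := by nlinarith
        exact le_of_mul_le_mul_left this hl
      · have := (hG.m1 a 0 (-a) (by linarith)).2
        rw [add_neg_cancel, hG.z] at this
        have : L * a ≤ L * (-(μ / L) + B * |q r|) := by nlinarith
        exact le_of_mul_le_mul_left this hL
    have h7 : B * |q r| ≤ q r ^ 2 / 2 + B ^ 2 / 2 := by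
      nlinarith [sq_nonneg (B - |q r|), sq_abs (q r)]
    linarith
  have hd : ∀ x ∈ Ioo (1/2 : ℝ) 1, HasDerivAt (fun r => Real.arctan (q r / 16) + 8 * r)
      (1 / (1 + (q x / 16) ^ 2) * (deriv q x / 16) + 8 * 1) x := by
    intro x hx
    exact (((h.hasDeriv hx).div_const 16).arctan).add ((hasDerivAt_id x).const_mul 8)
  have := anti_aux hd (fun x hx => ?_) (x := 0.51) (y := 0.99) (by norm_num) (by norm_num)
    (by norm_num)
  · have h1 := Real.arctan_lt_pi_div_two (q 0.51 / 16)
    have h2 := Real.neg_pi_div_two_lt_arctan (q 0.99 / 16)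
    have := Real.pi_lt_d2
    norm_num at *
    linarith
  · have hk := key x hx
    have h0 : 0 < 1 + (q x / 16) ^ 2 := by positivity
    rw [one_div, ← div_eq_inv_mul]
    have : deriv q x / 16 / (1 + (q x / 16) ^ 2) ≤ -8 := by
      rw [div_le_iff₀ h0]; nlinarith
    linarith

/-- crossing -/
lemma cross_aux {G l L n} (hG : GE G l L n) {γ μ m A c ρ δ : ℝ} {q : ℝ → ℝ}
    (hγ0 : 0 < γ) (hγ2 : γ < 2) (hc : G (γ - 1) (-1) = -c) (hA : 0 < A) (hm : A * c = m)
    (hρ0 : 0 < ρ) (hρ1 : ρ < 1 / 2) {c1 : ℝ} (hc1 : 0 < c1) (hc1' : L * c1 = μ - m)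
    (hρ : ∀ r, 0 < r → r ≤ ρ → A ^ 2 * r ^ (2 - γ) ≤ c1 / 2)
    (hδ0 : 0 < δ)
    (hδ : 2 * δ = ρ / 2 * Real.exp (-(2 / (c1 * ρ ^ 2 / 16))))
    (hq : Ric G γ μ δ q) : ∃ r ∈ Ioo δ ρ, q r < -A * r ^ (1 - γ) := by
  by_contra hcon
  push Not at hcon
  have hl := hG.hl
  have hlL := hG.hlL
  have hL : 0 < L := lt_of_lt_of_le hG.hl hG.hlL
  have hn := hG.npos
  set k := c1 * ρ ^ 2 / 16 with hk
  have hkpos : 0 < k := by positivity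
  set q0 : ℝ → ℝ := fun r => -A * r ^ (1 - γ) with hq0
  have hd0 : ∀ r, 0 < r → HasDerivAt q0 (-A * ((1 - γ) * r ^ (-γ))) r := by
    intro r hr
    have := (Real.hasDerivAt_rpow_const (x := r) (p := 1 - γ) (Or.inl hr.ne')).const_mul (-A)
    rw [show -γ = 1 - γ - 1 by ring]
    exact this
  have hsub : ∀ r ∈ Ioo δ ρ, r ∈ Ioo δ 1 := fun r hr => ⟨hr.1, by linarith [hr.2]⟩
  have hz : ∀ r ∈ Ioo δ ρ, deriv q r - (-A * ((1 - γ) * r ^ (-γ))) ≤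
      -((q r - q0 r) / r) - (q r - q0 r) ^ 2 / 2 - c1 / 2 * r ^ (-γ) := by
    intro r hr
    have hr0 : 0 < r := hδ0.trans hr.1
    have hi := hq.2 r (hsub r hr)
    have hrg : 0 < r ^ (-γ) := rpow_pos_of_pos hr0 _
    have hz0 : 0 ≤ q r - q0 r := by have := hcon r hr; simp only [hq0]; linarith
    set P0 := -A * ((1 - γ) * r ^ (-γ)) with hP0
    have hq0r : q0 r / r = A * r ^ (-γ) * (-1) := by
      simp only [hq0]
      rw [show (1 - γ) = 1 + -γ by ring, rpow_add hr0, rpow_one]; field_simp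
    have g0 : G P0 (q0 r / r) = -m * r ^ (-γ) := by
      rw [hq0r, show P0 = A * r ^ (-γ) * (γ - 1) by rw [hP0]; ring,
        hG.hom _ _ _ (by positivity), hc, ← hm]; ring
    have g1 := (hG.m2 (deriv q r + q r ^ 2) (q0 r / r) ((q r - q0 r) / r) (by positivity)).1
    rw [show q0 r / r + (q r - q0 r) / r = q r / r by ring] at g1
    set a := deriv q r + q r ^ 2 with ha
    set w := (q r - q0 r) / r with hw
    have hw0 : 0 ≤ w := by positivity
    have g2 : L * w ≤ l * n * w := by
      have := hG.hn; gcongr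
    have g3 : G a (q0 r / r) + L * c1 * r ^ (-γ) + L * w ≤ G P0 (q0 r / r) := by
      rw [g0, hc1']; nlinarith
    have g4 : a ≤ P0 := by
      by_contra hh
      push Not at hh
      have := (hG.m1 P0 (q0 r / r) (a - P0) (by linarith)).1
      rw [add_sub_cancel] at this
      have h8 : 0 < l * (a - P0) := mul_pos hl (by linarith)
      have h9 : 0 ≤ L * c1 * r ^ (-γ) := by positivity
      have h10 : 0 ≤ L * w := by positivity
      linarith
    have g5 := (hG.m1 a (q0 r / r) (P0 - a) (by linarith)).2
    rw [add_sub_cancel] at g5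
    have g6 : L * (c1 * r ^ (-γ) + w) ≤ L * (P0 - a) := by linarith
    have g7 := le_of_mul_le_mul_left g6 hL
    have g8 : q0 r ^ 2 ≤ c1 / 2 * r ^ (-γ) := by
      have : q0 r ^ 2 = A ^ 2 * r ^ (2 - γ) * r ^ (-γ) := by
        simp only [hq0]
        rw [mul_pow, mul_assoc, ← rpow_add hr0, sq (r ^ (1 - γ)), ← rpow_add hr0,
          show 2 - γ + -γ = 1 - γ + (1 - γ) by ring]
        ring
      rw [this]
      have := hρ r hr0 hr.2.le
      gcongr
    nlinarith [sq_nonneg (q r - q0 r + 2 * q0 r)]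
  set y : ℝ → ℝ := fun r => r * (q r - q0 r) with hy
  have hyd : ∀ r ∈ Ioo δ ρ, HasDerivAt y
      (1 * (q r - q0 r) + r * (deriv q r - (-A * ((1 - γ) * r ^ (-γ))))) r := by
    intro r hr
    exact (hasDerivAt_id r).mul ((hq.hasDeriv (hsub r hr)).sub (hd0 r (hδ0.trans hr.1)))
  have hyn : ∀ r ∈ Ioo δ ρ,
      1 * (q r - q0 r) + r * (deriv q r - (-A * ((1 - γ) * r ^ (-γ)))) ≤
        -(y r ^ 2 / (2 * r)) - c1 / 2 * r := by
    intro r hr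
    have hr0 : 0 < r := hδ0.trans hr.1
    have h1 : (1:ℝ) ≤ r ^ (-γ) :=
      one_le_rpow_of_pos_of_le_one_of_nonpos hr0 (hsub r hr).2.le (by linarith)
    have h2 := mul_le_mul_of_nonneg_left (hz r hr) hr0.le
    have h3 : r * ((q r - q0 r) / r) = q r - q0 r := by field_simp
    have h4 : y r ^ 2 / (2 * r) = r * ((q r - q0 r) ^ 2 / 2) := by
      simp only [hy]; field_simp
    rw [h4]
    have h5 : c1 / 2 * r ≤ r * (c1 / 2 * r ^ (-γ)) := by
      have : c1 / 2 * r * 1 ≤ c1 / 2 * r * r ^ (-γ) := by gcongr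
      linarith
    linarith
  have hy0 : ∀ r ∈ Ioo δ ρ, 0 ≤ y r := by
    intro r hr
    have := hcon r hr
    exact mul_nonneg (hδ0.trans hr.1).le (by simp only [hq0]; linarith)
  have hexp : Real.exp (-(2 / k)) < 1 := by
    rw [Real.exp_lt_one_iff]
    have : 0 < 2 / k := by positivity
    linarith
  have h2δ : 2 * δ < ρ / 2 := by
    rw [hδ]; nlinarith
  -- lower bound
  have hlow : k ≤ y (ρ / 2) := by
    have := anti_aux (f := fun r => y r + c1 / 4 * r ^ 2) (a := δ) (b := ρ)
      (fun x hx => (hyd x hx).add ((hasDerivAt_pow 2 x).const_mul (c1 / 4))) (fun x hx => ?_)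
      (x := ρ / 2) (y := 3 * ρ / 4) (by linarith) (by linarith) (by linarith)
    · have h0 := hy0 (3 * ρ / 4) ⟨by linarith, by linarith⟩
      nlinarith [mul_pos hc1 (pow_pos hρ0 2)]
    · have h1 := hyn x hx
      have hx0 : 0 < x := hδ0.trans hx.1
      have h2 : 0 ≤ y x ^ 2 / (2 * x) := by positivity
      norm_num
      norm_num at h1
      linarith
  have hyk : ∀ r, δ < r → r < ρ / 2 → k ≤ y r := by
    intro r h1 h2
    refine hlow.trans ?_
    refine anti_aux (a := δ) (b := ρ) hyd (fun x hx => ?_) h1 h2.le (by linarith)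
    have h1 := hyn x hx
    have hx0 : 0 < x := hδ0.trans hx.1
    have h2 : 0 ≤ y x ^ 2 / (2 * x) := by positivity
    have h3 : 0 ≤ c1 / 2 * x := by positivity
    linarith
  have hypos : ∀ r ∈ Ioo δ ρ, r ≤ ρ / 2 → 0 < y r := by
    intro r hr h
    rcases h.lt_or_eq with h | h
    · exact hkpos.trans_le (hyk r hr.1 h)
    · rw [h]; exact hkpos.trans_le hlow
  have hfin : ∀ s, 2 * δ ≤ s → s < ρ / 2 →
      (y (2 * δ))⁻¹ - Real.log (2 * δ) / 2 ≤ (y s)⁻¹ - Real.log s / 2 := by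
    intro s h1 h2
    have := anti_aux (f := fun r => Real.log r / 2 - (y r)⁻¹) (a := δ) (b := ρ / 2)
      (fun x hx => ((Real.hasDerivAt_log (hδ0.trans hx.1).ne').div_const 2).sub
        ((hyd x ⟨hx.1, by linarith [hx.2]⟩).inv
          (hypos x ⟨hx.1, by linarith [hx.2]⟩ hx.2.le).ne')) (fun x hx => ?_)
      (x := 2 * δ) (y := s) (by linarith) h1 h2
    · linarith
    · have hx' : x ∈ Ioo δ ρ := ⟨hx.1, by linarith [hx.2]⟩
      have h1 := hyn x hx'
      have hx0 : 0 < x := hδ0.trans hx.1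
      have hp := hypos x hx' hx.2.le
      have h3 : 0 ≤ c1 / 2 * x := by positivity
      set D := 1 * (q x - q0 x) + x * (deriv q x - (-A * ((1 - γ) * x ^ (-γ))))
      have h4 : x⁻¹ / 2 ≤ -D / y x ^ 2 := by
        rw [le_div_iff₀ (by positivity)]
        have : x⁻¹ / 2 * y x ^ 2 = y x ^ 2 / (2 * x) := by field_simp
        linarith
      linarith
  -- take limit s → ρ/2
  have hmem : ρ / 2 ∈ Ioo δ ρ := ⟨by linarith, by linarith⟩
  have hlim : (y (2 * δ))⁻¹ - Real.log (2 * δ) / 2 ≤ (y (ρ / 2))⁻¹ - Real.log (ρ / 2) / 2 := by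
    have hct : ContinuousAt (fun s => (y s)⁻¹ - Real.log s / 2) (ρ / 2) :=
      ((hyd _ hmem).continuousAt.inv₀ (hypos _ hmem le_rfl).ne').sub
        ((Real.continuousAt_log (by positivity)).div_const 2)
    refine ge_of_tendsto (hct.tendsto.mono_left (nhdsWithin_le_nhds (s := Iio (ρ / 2)))) ?_
    filter_upwards [Ioo_mem_nhdsLT h2δ] with s hs
    exact hfin s hs.1.le hs.2
  have hlog : Real.log (2 * δ) = Real.log (ρ / 2) - 2 / k := by
    rw [hδ, Real.log_mul (by positivity) (Real.exp_pos _).ne', Real.log_exp]; ring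
  have h1 : 0 < (y (2 * δ))⁻¹ := inv_pos.2 (hypos _ ⟨by linarith, by linarith⟩ h2δ.le)
  have h2 : (y (ρ / 2))⁻¹ ≤ k⁻¹ := inv_anti₀ hkpos hlow
  rw [hlog] at hlim
  have h3 : 2 / k / 2 = k⁻¹ := by field_simp
  linarith

lemma st_deriv (t : ℝ) : smoothTransition t * (1 - smoothTransition t) ≤
    deriv smoothTransition t := by
  have hmon : 0 ≤ deriv smoothTransition t := smoothTransition.monotone.deriv_nonneg
  rcases le_or_gt t 0 with h0 | h0
  · rw [smoothTransition.zero_of_nonpos h0]; simpa using hmon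
  rcases le_or_gt 1 t with h1 | h1
  · rw [smoothTransition.one_of_one_le h1]; simpa using hmon
  have hf : ∀ x : ℝ, 0 < x → HasDerivAt expNegInvGlue (expNegInvGlue x * (x ^ 2)⁻¹) x := by
    intro x hx
    have e : expNegInvGlue =ᶠ[nhds x] fun y => Real.exp (-y⁻¹) := by
      filter_upwards [lt_mem_nhds hx] with y hy
      simp [expNegInvGlue, not_le.2 hy]
    have h := ((hasDerivAt_inv hx.ne').neg).exp
    have h2 := h.congr_of_eventuallyEq e
    have e2 : expNegInvGlue x = Real.exp (-x⁻¹) := by simp [expNegInvGlue, not_le.2 hx]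
    rw [e2, ← neg_neg ((x ^ 2)⁻¹)]
    exact h2
  have ha := hf t h0
  have hb : HasDerivAt (fun x => expNegInvGlue (1 - x))
      (expNegInvGlue (1 - t) * ((1 - t) ^ 2)⁻¹ * (-1)) t := by
    have h := (hasDerivAt_id t).const_sub 1
    exact (hf (1 - t) (by linarith)).comp t h
  have hd := ha.div (ha.add hb) (smoothTransition.pos_denom t).ne'
  have he : deriv smoothTransition t = _ := hd.deriv
  rw [he]
  simp only [smoothTransition, Pi.add_apply]
  have p1 := expNegInvGlue.pos_of_pos h0
  have p2 := expNegInvGlue.pos_of_pos (show 0 < 1 - t by linarith)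
  set f := expNegInvGlue t
  set g := expNegInvGlue (1 - t)
  have i1 : 1 ≤ (t ^ 2)⁻¹ := (one_le_inv₀ (by positivity)).2 (by nlinarith)
  have i2 : 0 ≤ ((1 - t) ^ 2)⁻¹ := by positivity
  set x := (t ^ 2)⁻¹
  set z := ((1 - t) ^ 2)⁻¹
  have e1 : f / (f + g) * (1 - f / (f + g)) = f * g / (f + g) ^ 2 := by
    field_simp; ring
  rw [e1]
  gcongr
  have : 0 < f * g := by positivity
  nlinarith [mul_nonneg this.le i2, mul_nonneg this.le (sub_nonneg.2 i1)]

lemma mid_aux {G l L n} (hG : GE G l L n) {r s q0 q1 P0 P1 B T T' M J η C : ℝ}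
    (hs : 0 < s) (hr : s ≤ r) (b0 : |q0| ≤ B) (b1 : |q1| ≤ B) (b2 : |P0| ≤ B) (b3 : |P1| ≤ B)
    (hT0 : 0 ≤ T) (hT1 : T ≤ 1) (g0 : G (P0 + q0 ^ 2) (q0 / r) ≤ -M)
    (g1 : G (P1 + q1 ^ 2) (q1 / r) ≤ -M) (hJ : 0 < J) (hq : J ≤ q0 - q1) (hη : 0 < η)
    (hT' : T * (1 - T) / η ≤ T') (hC : C = L * (2 * B + 4 * B ^ 2) + L * n * (2 * B / s))
    (hηC : η * (2 * C) ≤ l * J) :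
    G (P0 + (T' * (q1 - q0) + T * (P1 - P0)) + (q0 + T * (q1 - q0)) ^ 2)
      ((q0 + T * (q1 - q0)) / r) ≤ -M := by
  have hl := hG.hl
  have hL : 0 < L := lt_of_lt_of_le hG.hl hG.hlL
  have hn := hG.npos
  have hr0 : 0 < r := lt_of_lt_of_le hs hr
  have hB : 0 ≤ B := (abs_nonneg _).trans b0
  set q := q0 + T * (q1 - q0) with hqd
  set a := P0 + T * (P1 - P0) + q ^ 2 with ha
  have hTT : 0 ≤ T * (1 - T) := mul_nonneg hT0 (by linarith)
  have hT'0 : 0 ≤ T' := le_trans (by positivity) hT'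
  have hX : 0 ≤ T' * (q0 - q1) := mul_nonneg hT'0 (by linarith)
  rw [abs_le] at b0 b1 b2 b3
  have hqB : -B ≤ q ∧ q ≤ B := by constructor <;> nlinarith
  have A1 : ∀ t x P : ℝ, 0 ≤ t → -B ≤ x → x ≤ B → |q - x| ≤ t * (2 * B) →
      |P0 + T * (P1 - P0) - P| ≤ t * (2 * B) → G (P + x ^ 2) (x / r) ≤ -M →
      G a (q / r) ≤ -M + C * t := by
    intro t x P ht hx1 hx2 h1 h2 h3
    have h4 := hG.lip a (q / r) (P + x ^ 2) (x / r)
    have h5 : |q / r - x / r| ≤ t * (2 * B / s) := by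
      rw [← sub_div, abs_div, abs_of_pos hr0]
      calc |q - x| / r ≤ t * (2 * B) / s := by gcongr
        _ = _ := by ring
    have h6 : |a - (P + x ^ 2)| ≤ t * (2 * B + 4 * B ^ 2) := by
      have e : a - (P + x ^ 2) = (P0 + T * (P1 - P0) - P) + (q - x) * (q + x) := by
        rw [ha]; ring
      rw [e]
      refine (abs_add_le _ _).trans ?_
      rw [abs_mul]
      have h7 : |q + x| ≤ 2 * B := by rw [abs_le]; constructor <;> linarith
      have h8 : |q - x| * |q + x| ≤ t * (2 * B) * (2 * B) := by gcongr
      nlinarith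
    have h9 : L * |a - (P + x ^ 2)| ≤ L * (t * (2 * B + 4 * B ^ 2)) := by gcongr
    have h10 : L * n * |q / r - x / r| ≤ L * n * (t * (2 * B / s)) := by gcongr
    have e : C * t = L * (t * (2 * B + 4 * B ^ 2)) + L * n * (t * (2 * B / s)) := by
      rw [hC]; ring
    linarith
  have hA := A1 T q0 P0 hT0 b0.1 b0.2 (by
      rw [hqd, add_sub_cancel_left, abs_mul, abs_of_nonneg hT0]
      gcongr; rw [abs_le]; constructor <;> linarith) (by
      rw [add_sub_cancel_left, abs_mul, abs_of_nonneg hT0]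
      gcongr; rw [abs_le]; constructor <;> linarith) g0
  have hB' := A1 (1 - T) q1 P1 (by linarith) b1.1 b1.2 (by
      rw [show q - q1 = (1 - T) * (q0 - q1) by rw [hqd]; ring, abs_mul,
        abs_of_nonneg (show 0 ≤ 1 - T by linarith)]
      have : 0 ≤ 1 - T := by linarith
      gcongr; rw [abs_le]; constructor <;> linarith) (by
      rw [show P0 + T * (P1 - P0) - P1 = (1 - T) * (P0 - P1) by ring, abs_mul,
        abs_of_nonneg (show 0 ≤ 1 - T by linarith)]
      have : 0 ≤ 1 - T := by linarith
      gcongr; rw [abs_le]; constructor <;> linarith) g1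
  have hAB : G a (q / r) ≤ -M + 2 * C * (T * (1 - T)) := by
    have := mul_le_mul_of_nonneg_left hA (show 0 ≤ 1 - T by linarith)
    have := mul_le_mul_of_nonneg_left hB' hT0
    linarith
  have hm := (hG.m1 (a - T' * (q0 - q1)) (q / r) (T' * (q0 - q1)) hX).1
  rw [sub_add_cancel] at hm
  have e : P0 + (T' * (q1 - q0) + T * (P1 - P0)) + q ^ 2 = a - T' * (q0 - q1) := by
    rw [ha]; ring
  rw [e]
  have h1 : 2 * C * (T * (1 - T)) ≤ l * (T' * (q0 - q1)) := by
    have k1 : T * (1 - T) ≤ T' * η := by rwa [div_le_iff₀ hη] at hT'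
    have k2 : T' * (η * (2 * C)) ≤ T' * (l * J) := by gcongr
    have k3 : T' * l * J ≤ T' * l * (q0 - q1) := by gcongr
    have hC0 : 0 ≤ C := by rw [hC]; positivity
    have k4 : 2 * C * (T * (1 - T)) ≤ 2 * C * (T' * η) := by gcongr
    linarith
  linarith

lemma fromP {G l L n} (hG : GE G l L n) {γ μ : ℝ} {w p : ℝ → ℝ}
    (hw : ∀ r ∈ Ioo (0:ℝ) 1, HasDerivAt w (p r) r) (hp : ContDiffOn ℝ 1 p (Ioo 0 1))
    (hi : ∀ r ∈ Ioo (0:ℝ) 1, G (deriv p r + p r ^ 2) (p r / r) ≤ -μ * r ^ (-γ)) :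
    ContDiffOn ℝ 2 (fun r => Real.exp (w r)) (Ioo 0 1) ∧
    ∀ r ∈ Ioo (0:ℝ) 1, G (deriv (deriv (fun r => Real.exp (w r))) r)
      (deriv (fun r => Real.exp (w r)) r / r) + μ * Real.exp (w r) * r ^ (-γ) ≤ 0 := by
  have hd : ∀ r ∈ Ioo (0:ℝ) 1, deriv w r = p r := fun r hr => (hw r hr).deriv
  have hwC : ContDiffOn ℝ 2 w (Ioo 0 1) := by
    have : ContDiffOn ℝ (1 + 1) w (Ioo 0 1) := by
      refine (contDiffOn_succ_iff_deriv_of_isOpen (n := 1) isOpen_Ioo).2 ⟨?_, by simp, ?_⟩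
      · exact fun r hr => (hw r hr).differentiableAt.differentiableWithinAt
      · exact hp.congr hd
    norm_num at this
    exact this
  refine ⟨hwC.exp, ?_⟩
  intro r hr
  have d1 : ∀ x ∈ Ioo (0:ℝ) 1, deriv (fun r => Real.exp (w r)) x = Real.exp (w x) * p x :=
    fun x hx => (hw x hx).exp.deriv
  have hpd : HasDerivAt p (deriv p r) r :=
    ((hp.differentiableOn (by norm_num)).differentiableAt (isOpen_Ioo.mem_nhds hr)).hasDerivAt
  have d2 : deriv (deriv (fun r => Real.exp (w r))) r =
      Real.exp (w r) * (deriv p r + p r ^ 2) := by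
    have : deriv (fun r => Real.exp (w r)) =ᶠ[nhds r] fun x => Real.exp (w x) * p x := by
      filter_upwards [isOpen_Ioo.mem_nhds hr] with x hx using d1 x hx
    rw [this.deriv_eq]
    have h := ((hw r hr).exp.mul hpd).deriv
    rw [show (fun x => Real.exp (w x) * p x) = (fun x => Real.exp (w x)) * p from rfl, h]
    ring
  rw [d2, d1 r hr, mul_div_assoc, hG.hom _ _ _ (Real.exp_pos _)]
  have := mul_le_mul_of_nonneg_left (hi r hr) (Real.exp_pos (w r)).le
  linarith

lemma glue {G l L n} (hG : GE G l L n) {γ μ' δ ρ s A : ℝ} {q : ℝ → ℝ} (hγ2 : γ < 2)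
    (hδ : 0 < δ) (hρ : ρ < 1) (hq : Ric G γ μ' δ q) (hs : s ∈ Ioo δ ρ)
    (h0 : ∀ r ∈ Ioo (0:ℝ) ρ, G (-A * ((1 - γ) * r ^ (-γ)) + (-A * r ^ (1 - γ)) ^ 2)
      (-A * r ^ (1 - γ) / r) ≤ -μ' * r ^ (-γ))
    (hlt : q s < -A * s ^ (1 - γ)) :
    ∃ u : ℝ → ℝ, ContinuousOn u (Ico 0 1) ∧ ContDiffOn ℝ 2 u (Ioo 0 1) ∧
      (∀ r ∈ Ico (0:ℝ) 1, 0 < u r) ∧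
      (∀ r ∈ Ioo (0:ℝ) 1,
        G (deriv (deriv u) r) (deriv u r / r) + μ' * u r * r ^ (-γ) ≤ 0) := by
  have hl := hG.hl
  have hL : 0 < L := lt_of_lt_of_le hG.hl hG.hlL
  have hn := hG.npos
  have hs0 : 0 < s := hδ.trans hs.1
  set q0 : ℝ → ℝ := fun r => -A * r ^ (1 - γ) with hq0
  have hd0 : ∀ r, 0 < r → HasDerivAt q0 (-A * ((1 - γ) * r ^ (-γ))) r := by
    intro r hr
    have := (Real.hasDerivAt_rpow_const (x := r) (p := 1 - γ) (Or.inl hr.ne')).const_mul (-A)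
    rw [show -γ = 1 - γ - 1 by ring]
    exact this
  have hq0C : ∀ r, 0 < r → ContDiffAt ℝ 1 q0 r := by
    intro r hr
    exact contDiffAt_const.mul (Real.contDiffAt_rpow_const (Or.inl hr.ne'))
  have hqC : ∀ r ∈ Ioo δ 1, ContDiffAt ℝ 1 q r := fun r hr =>
    hq.1.contDiffAt (isOpen_Ioo.mem_nhds hr)
  -- neighbourhood
  set J := (q0 s - q s) / 2 with hJd
  have hJ : 0 < J := by
    have : q s < q0 s := hlt
    linarith
  obtain ⟨ε, hε, hεs⟩ : ∃ ε > 0, ∀ r, |r - s| < ε → J ≤ q0 r - q r ∧ r ∈ Ioo δ ρ := by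
    have hc : ContinuousAt (fun r => q0 r - q r) s :=
      (hq0C s hs0).continuousAt.sub (hqC s ⟨hs.1, hs.2.trans hρ⟩).continuousAt
    have h1 : ∀ᶠ r in nhds s, J < q0 r - q r := hc.eventually (lt_mem_nhds (by linarith))
    have h2 : ∀ᶠ r in nhds s, J ≤ q0 r - q r ∧ r ∈ Ioo δ ρ := by
      filter_upwards [h1, isOpen_Ioo.mem_nhds hs] with r a b using ⟨a.le, b⟩
    obtain ⟨ε, hε, h⟩ := Metric.eventually_nhds_iff.1 h2
    exact ⟨ε, hε, fun r hr => h (by rwa [Real.dist_eq])⟩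
  have hK : ∀ r ∈ Icc s (s + ε / 2), J ≤ q0 r - q r ∧ r ∈ Ioo δ ρ := fun r hr =>
    hεs r (by rw [abs_lt]; constructor <;> linarith [hr.1, hr.2])
  obtain ⟨B, hB0, hB⟩ : ∃ B, 0 < B ∧ ∀ r ∈ Icc s (s + ε / 2), |q0 r| ≤ B ∧ |q r| ≤ B ∧
      |-A * ((1 - γ) * r ^ (-γ))| ≤ B ∧ |deriv q r| ≤ B := by
    have hdq : ContinuousOn (deriv q) (Ioo δ 1) :=
      hq.1.continuousOn_deriv_of_isOpen isOpen_Ioo (by norm_num)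
    have hcc : ContinuousOn (fun r => |q0 r| + |q r| + |-A * ((1 - γ) * r ^ (-γ))| + |deriv q r|)
        (Icc s (s + ε / 2)) := by
      intro r hr
      have hr' := (hK r hr).2
      have hr1 : r ∈ Ioo δ 1 := ⟨hr'.1, hr'.2.trans hρ⟩
      have hr0 : 0 < r := hδ.trans hr'.1
      refine ContinuousAt.continuousWithinAt ?_
      have c1 := (hq0C r hr0).continuousAt.abs
      have c2 := (hqC r hr1).continuousAt.abs
      have c3 : ContinuousAt (fun r : ℝ => |-A * ((1 - γ) * r ^ (-γ))|) r :=
        (continuousAt_const.mul (continuousAt_const.mul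
          (Real.continuousAt_rpow_const r (-γ) (Or.inl hr0.ne')))).abs
      have c4 := (hdq.continuousAt (isOpen_Ioo.mem_nhds hr1)).abs
      exact ((c1.add c2).add c3).add c4
    obtain ⟨C, hC⟩ := isCompact_Icc.exists_bound_of_continuousOn hcc
    refine ⟨|C| + 1, by positivity, fun r hr => ?_⟩
    have h := (le_abs_self _).trans (hC r hr)
    have h' := le_abs_self C
    have a1 := abs_nonneg (q0 r)
    have a2 := abs_nonneg (q r)
    have a3 := abs_nonneg (-A * ((1 - γ) * r ^ (-γ)))
    have a4 := abs_nonneg (deriv q r)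
    refine ⟨?_, ?_, ?_, ?_⟩ <;> linarith
  set C := L * (2 * B + 4 * B ^ 2) + L * n * (2 * B / s) with hC
  have hC0 : 0 < C := by positivity
  set η := min (ε / 2) (l * J / (2 * C)) with hη
  have hη0 : 0 < η := lt_min (by positivity) (by positivity)
  have hηε : η ≤ ε / 2 := min_le_left _ _
  have hηC : η * (2 * C) ≤ l * J := by
    rw [← le_div_iff₀ (by positivity)]; exact min_le_right _ _
  set T : ℝ → ℝ := fun r => smoothTransition ((r - s) / η) with hT
  have hTd : ∀ r, HasDerivAt T (deriv smoothTransition ((r - s) / η) * (1 / η)) r := by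
    intro r
    have h1 : HasDerivAt (fun r => (r - s) / η) (1 / η) r :=
      ((hasDerivAt_id r).sub_const s).div_const η
    have h2 : HasDerivAt smoothTransition (deriv smoothTransition ((r - s) / η)) ((r - s) / η) :=
      ((smoothTransition.contDiffAt (n := 1)).differentiableAt (by norm_num)).hasDerivAt
    exact h2.comp r h1
  have hTC : ContDiff ℝ 1 T :=
    (smoothTransition.contDiff (n := 1)).comp ((contDiff_id.sub contDiff_const).div_const η)
  have hTlo : ∀ r ≤ s, T r = 0 := fun r hr =>
    smoothTransition.zero_of_nonpos (div_nonpos_of_nonpos_of_nonneg (by linarith) hη0.le)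
  have hThi : ∀ r, s + η ≤ r → T r = 1 := fun r hr =>
    smoothTransition.one_of_one_le (by rw [le_div_iff₀ hη0]; linarith)
  set g : ℝ → ℝ := fun r => T r * (q r - q0 r) with hg
  have hglo : ∀ r < s, g =ᶠ[nhds r] fun _ => 0 := by
    intro r hr
    filter_upwards [gt_mem_nhds hr] with x hx
    simp only [hg]; rw [hTlo x hx.le, zero_mul]
  have hgC : ∀ r < 1, ContDiffAt ℝ 1 g r := by
    intro r hr
    rcases lt_or_ge r s with h | h
    · exact contDiffAt_const.congr_of_eventuallyEq (hglo r h)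
    · have h1 : r ∈ Ioo δ 1 := ⟨hs.1.trans_le h, hr⟩
      exact hTC.contDiffAt.mul ((hqC r h1).sub (hq0C r (hδ.trans h1.1)))
  have hgc : ContinuousOn g (Iio 1) := fun r hr => (hgC r hr).continuousAt.continuousWithinAt
  set I : ℝ → ℝ := fun r => ∫ x in s..r, g x with hI
  have hId : ∀ r < 1, HasDerivAt I (g r) r := by
    intro r hr
    refine intervalIntegral.integral_hasDerivAt_right ?_ ?_ (hgC r hr).continuousAt
    · apply ContinuousOn.intervalIntegrable
      apply hgc.mono
      intro x hx
      exact lt_of_le_of_lt hx.2 (max_lt (hs.2.trans hρ) hr)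
    · exact hgc.stronglyMeasurableAtFilter isOpen_Iio r hr
  set w : ℝ → ℝ := fun r => -A / (2 - γ) * r ^ (2 - γ) + I r with hw
  set p : ℝ → ℝ := fun r => q0 r + g r with hp
  have hwd : ∀ r ∈ Ioo (0:ℝ) 1, HasDerivAt w (p r) r := by
    intro r hr
    have h1 := (Real.hasDerivAt_rpow_const (x := r) (p := 2 - γ)
      (Or.inl hr.1.ne')).const_mul (-A / (2 - γ))
    have h2 : -A / (2 - γ) * ((2 - γ) * r ^ (2 - γ - 1)) = q0 r := by
      have : 2 - γ ≠ 0 := by linarith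
      simp only [hq0]
      rw [show 2 - γ - 1 = 1 - γ by ring]; field_simp
    rw [h2] at h1
    exact h1.add (hId r hr.2)
  have hpC : ContDiffOn ℝ 1 p (Ioo 0 1) := fun r hr =>
    ((hq0C r hr.1).add (hgC r hr.2)).contDiffWithinAt
  have hpi : ∀ r ∈ Ioo (0:ℝ) 1, G (deriv p r + p r ^ 2) (p r / r) ≤ -μ' * r ^ (-γ) := by
    intro r hr
    rcases lt_or_ge r s with h | h
    · have e : p =ᶠ[nhds r] q0 := by
        filter_upwards [hglo r h] with x hx
        simp only [hp]; rw [hx, add_zero]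
      rw [e.deriv_eq, e.eq_of_nhds, (hd0 r hr.1).deriv]
      exact h0 r ⟨hr.1, h.trans hs.2⟩
    rcases le_or_gt r (s + η) with h' | h'
    · have hrK : r ∈ Icc s (s + ε / 2) := ⟨h, by linarith⟩
      obtain ⟨hJr, hrm⟩ := hK r hrK
      have hr1 : r ∈ Ioo δ 1 := ⟨hrm.1, hr.2⟩
      obtain ⟨b0, b1, b2, b3⟩ := hB r hrK
      have hdp : HasDerivAt p (-A * ((1 - γ) * r ^ (-γ)) +
          (deriv smoothTransition ((r - s) / η) * (1 / η) * (q r - q0 r) +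
            T r * (deriv q r - -A * ((1 - γ) * r ^ (-γ))))) r :=
        (hd0 r hr.1).add ((hTd r).mul ((hq.hasDeriv hr1).sub (hd0 r hr.1)))
      rw [hdp.deriv]
      have hst := st_deriv ((r - s) / η)
      have := mid_aux hG (T' := deriv smoothTransition ((r - s) / η) * (1 / η)) (T := T r)
        (M := μ' * r ^ (-γ)) hs0 h b0 b1 b2 b3 (smoothTransition.nonneg _)
        (smoothTransition.le_one _) (by have := h0 r ⟨hr.1, hrm.2⟩; simp only [hq0]; linarith)
        (by have := hq.2 r hr1; linarith) hJ hJr hη0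
        (by rw [div_eq_mul_one_div]; gcongr) hC hηC
      simp only [hp, hg]
      linarith
    · have e : p =ᶠ[nhds r] q := by
        filter_upwards [lt_mem_nhds h'] with x hx
        simp only [hp, hg]; rw [hThi x hx.le]; ring
      rw [e.deriv_eq, e.eq_of_nhds]
      exact hq.2 r ⟨hs.1.trans_le h, hr.2⟩
  obtain ⟨f1, f2⟩ := fromP hG hwd hpC hpi
  refine ⟨fun r => Real.exp (w r), ?_, f1, fun r _ => Real.exp_pos _, f2⟩
  intro r hr
  refine ContinuousAt.continuousWithinAt ?_
  refine ContinuousAt.rexp ?_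
  refine ContinuousAt.add ?_ (hId r hr.2).continuousAt
  exact continuousAt_const.mul (Real.continuousAt_rpow_const r (2 - γ) (Or.inr (by linarith)))

lemma key {G l L n} (hG : GE G l L n) {γ μ μ' : ℝ} (hγ0 : 0 < γ) (hγ2 : γ < 2)
    (hμ' : 0 < μ') (hμ : μ' < μ) (h : ∀ δ, 0 < δ → δ ≤ 1 / 2 → ∃ q, Ric G γ μ δ q) :
    ∃ u : ℝ → ℝ, ContinuousOn u (Ico 0 1) ∧ ContDiffOn ℝ 2 u (Ioo 0 1) ∧
      (∀ r ∈ Ico (0:ℝ) 1, 0 < u r) ∧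
      (∀ r ∈ Ioo (0:ℝ) 1,
        G (deriv (deriv u) r) (deriv u r / r) + μ' * u r * r ^ (-γ) ≤ 0) := by
  have hl := hG.hl
  have hL : 0 < L := lt_of_lt_of_le hG.hl hG.hlL
  have hn := hG.npos
  have hLn := hG.hn
  obtain ⟨c, hc⟩ : ∃ c, G (γ - 1) (-1) = -c := ⟨-G (γ - 1) (-1), by ring⟩
  have hc0 : 0 < c := by
    have h1 := (hG.m2 (γ - 1) (-1) 1 zero_le_one).1
    rw [neg_add_cancel] at h1
    have h2 : G (γ - 1) 0 < L := by
      rcases le_total 0 (γ - 1) with hh | hh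
      · have := (hG.m1 0 0 (γ - 1) hh).2
        rw [zero_add, hG.z] at this
        nlinarith
      · have := (hG.m1 (γ - 1) 0 (-(γ - 1)) (by linarith)).1
        rw [add_neg_cancel, hG.z] at this
        nlinarith
    linarith
  set m := (μ + μ') / 2 with hm
  set A := m / c with hA
  have hm0 : 0 < m := by linarith
  have hA0 : 0 < A := by positivity
  have hAc : A * c = m := by rw [hA]; field_simp
  set c1 := (μ - m) / L with hc1
  have hc10 : 0 < c1 := div_pos (by linarith) hL
  have hLc1 : L * c1 = μ - m := by rw [hc1]; field_simp
  obtain ⟨ρ, hρ0, hρ1, hρ⟩ : ∃ ρ : ℝ, 0 < ρ ∧ ρ < 1 / 2 ∧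
      ∀ r, 0 < r → r ≤ ρ → A ^ 2 * r ^ (2 - γ) ≤ c1 / 2 := by
    have hct : ContinuousAt (fun r : ℝ => A ^ 2 * r ^ (2 - γ)) 0 :=
      continuousAt_const.mul (Real.continuousAt_rpow_const 0 (2 - γ) (Or.inr (by linarith)))
    have h0 : A ^ 2 * (0:ℝ) ^ (2 - γ) < c1 / 2 := by
      rw [Real.zero_rpow (by linarith), mul_zero]; positivity
    obtain ⟨e, he, hh⟩ := Metric.eventually_nhds_iff.1 (hct.eventually (gt_mem_nhds h0))
    refine ⟨min (e / 2) (1 / 4), by positivity, ?_, ?_⟩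
    · exact lt_of_le_of_lt (min_le_right _ _) (by norm_num)
    · intro r h1 h2
      have := h2.trans (min_le_left _ _)
      exact (hh (by rw [Real.dist_eq, sub_zero, abs_of_pos h1]; linarith)).le
  set δ := ρ / 4 * Real.exp (-(2 / (c1 * ρ ^ 2 / 16))) with hδ
  have hδ0 : 0 < δ := by positivity
  have hexp : Real.exp (-(2 / (c1 * ρ ^ 2 / 16))) ≤ 1 := by
    rw [Real.exp_le_one_iff]
    have : 0 < 2 / (c1 * ρ ^ 2 / 16) := by positivity
    linarith
  have hδ1 : δ ≤ 1 / 2 := by nlinarith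
  obtain ⟨q, hq⟩ := h δ hδ0 hδ1
  obtain ⟨s, hs, hqs⟩ := cross_aux hG hγ0 hγ2 hc hA0 hAc hρ0 hρ1 hc10 hLc1 hρ hδ0
    (by rw [hδ]; ring) hq
  have hq' : Ric G γ μ' δ q := by
    refine ⟨hq.1, fun r hr => (hq.2 r hr).trans ?_⟩
    have : 0 < r ^ (-γ) := rpow_pos_of_pos (hδ0.trans hr.1) _
    nlinarith
  refine glue hG hγ2 hδ0 (by linarith) hq' hs ?_ hqs
  intro r hr
  have hr0 := hr.1
  have hrg : 0 < r ^ (-γ) := rpow_pos_of_pos hr0 _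
  have hq0r : -A * r ^ (1 - γ) / r = A * r ^ (-γ) * (-1) := by
    rw [show (1 - γ) = 1 + -γ by ring, rpow_add hr0, rpow_one]; field_simp
  have g0 : G (-A * ((1 - γ) * r ^ (-γ))) (-A * r ^ (1 - γ) / r) = -m * r ^ (-γ) := by
    rw [hq0r, show -A * ((1 - γ) * r ^ (-γ)) = A * r ^ (-γ) * (γ - 1) by ring,
      hG.hom _ _ _ (by positivity), hc, ← hAc]; ring
  have g8 : (-A * r ^ (1 - γ)) ^ 2 ≤ c1 / 2 * r ^ (-γ) := by
    have : (-A * r ^ (1 - γ)) ^ 2 = A ^ 2 * r ^ (2 - γ) * r ^ (-γ) := by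
      rw [mul_pow, mul_assoc, ← rpow_add hr0, sq (r ^ (1 - γ)), ← rpow_add hr0,
        show 2 - γ + -γ = 1 - γ + (1 - γ) by ring]
      ring
    rw [this]
    have := hρ r hr0 hr.2.le
    gcongr
  have g9 := (hG.m1 (-A * ((1 - γ) * r ^ (-γ))) (-A * r ^ (1 - γ) / r)
    ((-A * r ^ (1 - γ)) ^ 2) (by positivity)).2
  have g10 := mul_le_mul_of_nonneg_left g8 hL.le
  have g11 : L * (c1 / 2 * r ^ (-γ)) = (μ - m) / 2 * r ^ (-γ) := by rw [← hLc1]; ring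
  have g12 : (μ - m) / 2 * r ^ (-γ) ≤ (m - μ') * r ^ (-γ) := by
    gcongr; linarith
  linarith

lemma GE_of {N : ℕ} (hN : 2 ≤ N) {lam Lam : ℝ} (hlam : 0 < lam) (hlL : lam ≤ Lam)
    (hNp : 2 < lam / Lam * ((N : ℝ) - 1) + 1)
    {F : Matrix (Fin N) (Fin N) ℝ → ℝ}
    (hF1 : UnifElliptic N lam Lam F) (hF3 : PosHomog N F) :
    GE (fun a b => F (Dmat N a b)) lam Lam ((N : ℝ) - 1) := by
  have hL : 0 < Lam := hlam.trans_le hlL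
  have hadd : ∀ a b x y, Dmat N (a + x) (b + y) = Dmat N a b + Dmat N x y := by
    intro a b x y
    unfold Dmat
    rw [Matrix.diagonal_add]
    congr 1; funext i; split_ifs <;> rfl
  have hsymm : ∀ a b, (Dmat N a b).IsSymm := fun a b => Matrix.isSymm_diagonal _
  have hpsd : ∀ x y, 0 ≤ x → 0 ≤ y → (Dmat N x y).PosSemidef := by
    intro x y hx hy
    refine Matrix.PosSemidef.diagonal ?_
    intro i
    simp only [Pi.zero_apply]
    split_ifs <;> assumption
  have htr : ∀ x y, (Dmat N x y).trace = x + ((N : ℝ) - 1) * y := by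
    intro x y
    obtain ⟨k, rfl⟩ : ∃ k, N = k + 1 := ⟨N - 1, by omega⟩
    unfold Dmat
    rw [Matrix.trace_diagonal, Fin.sum_univ_succ]
    simp
  have hz : F (Dmat N 0 0) = 0 := by
    have h1 := hF3 2 (by norm_num) (Dmat N 0 0)
    have h2 : (2:ℝ) • Dmat N 0 0 = Dmat N 0 0 := by
      unfold Dmat; ext i j; simp [Matrix.diagonal]
    rw [h2] at h1; linarith
  refine ⟨hlam, hlL, ?_, ?_, ?_, ?_, hz⟩
  · have : 1 < lam / Lam * ((N : ℝ) - 1) := by linarith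
    rw [div_mul_eq_mul_div, lt_div_iff₀ hL] at this
    linarith
  · intro a b x hx
    have := hF1 (Dmat N a b) (Dmat N x 0) (hsymm _ _) (hpsd _ _ hx le_rfl)
    rw [← hadd, htr, add_zero, mul_zero, add_zero] at this
    exact this
  · intro a b x hx
    have := hF1 (Dmat N a b) (Dmat N 0 x) (hsymm _ _) (hpsd _ _ le_rfl hx)
    rw [← hadd, htr, add_zero, zero_add, ← mul_assoc, ← mul_assoc] at this
    exact this
  · intro t a b ht
    have := hF3 t ht (Dmat N a b)
    rw [← this]
    show F _ = F _
    congr 1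
    unfold Dmat
    rw [← Matrix.diagonal_smul]
    congr 1; funext i; simp only [Pi.smul_apply, smul_eq_mul]; split_ifs <;> rfl

theorem stmt1 (N : ℕ) (hN : 2 ≤ N) (lam Lam : ℝ) (hlam : 0 < lam) (hlL : lam ≤ Lam)
    (hNp : 2 < lam / Lam * ((N : ℝ) - 1) + 1)
    (F : Matrix (Fin N) (Fin N) ℝ → ℝ)
    (hF1 : UnifElliptic N lam Lam F) (hF2 : RotInvariant N F) (hF3 : PosHomog N F)
    (γ : ℝ) (hγ0 : 0 < γ) (hγ2 : γ < 2) :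
    Tendsto (fun ε => epsEV N F γ ε) (nhdsWithin 0 (Ioi 0)) (nhds (radialEV N F γ)) ∧
    Tendsto (fun δ => deltaEV N F γ δ) (nhdsWithin 0 (Ioo 0 1)) (nhds (radialEV N F γ)) := by
  have hG := GE_of hN hlam hlL hNp hF1 hF3
  have hL : 0 < Lam := hlam.trans_le hlL
  set G : ℝ → ℝ → ℝ := fun a b => F (Dmat N a b) with hGdef
  set SR : Set ℝ := {μ : ℝ | ∃ u : ℝ → ℝ, ContDiffOn ℝ 2 u (Ioo 0 1) ∧
    (∀ r ∈ Ioo (0:ℝ) 1, 0 < u r) ∧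
    (∀ r ∈ Ioo (0:ℝ) 1,
      F (Dmat N (deriv (deriv u) r) (deriv u r / r)) + μ * u r * r ^ (-γ) ≤ 0)} with hSR
  set SE : ℝ → Set ℝ := fun ε => {μ : ℝ | ∃ u : ℝ → ℝ, ContinuousOn u (Ico 0 1) ∧
    ContDiffOn ℝ 2 u (Ioo 0 1) ∧ (∀ r ∈ Ico (0:ℝ) 1, 0 < u r) ∧
    (∀ r ∈ Ioo (0:ℝ) 1, F (Dmat N (deriv (deriv u) r) (deriv u r / r))
        + μ * u r * (r ^ 2 + ε ^ 2) ^ (-(γ / 2)) ≤ 0)} with hSE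
  set SD : ℝ → Set ℝ := fun δ => {μ : ℝ | ∃ u : ℝ → ℝ, ContDiffOn ℝ 2 u (Ioo δ 1) ∧
    (∀ r ∈ Ioo δ 1, 0 < u r) ∧ (∀ r ∈ Ioo δ 1,
      F (Dmat N (deriv (deriv u) r) (deriv u r / r)) + μ * u r * r ^ (-γ) ≤ 0)} with hSD
  have eR : radialEV N F γ = sSup SR := rfl
  have eE : ∀ ε, epsEV N F γ ε = sSup (SE ε) := fun ε => rfl
  have eD : ∀ δ, deltaEV N F γ δ = sSup (SD δ) := fun ε => rfl
  have hRD : ∀ δ, 0 ≤ δ → SR ⊆ SD δ := by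
    rintro δ hδ μ ⟨u, h1, h2, h3⟩
    have hs : Ioo δ 1 ⊆ Ioo 0 1 := Ioo_subset_Ioo_left hδ
    exact ⟨u, h1.mono hs, fun r hr => h2 r (hs hr), fun r hr => h3 r (hs hr)⟩
  have hDD : ∀ δ δ', δ ≤ δ' → SD δ ⊆ SD δ' := by
    rintro δ δ' hδ μ ⟨u, h1, h2, h3⟩
    have hs : Ioo δ' 1 ⊆ Ioo δ 1 := Ioo_subset_Ioo_left hδ
    exact ⟨u, h1.mono hs, fun r hr => h2 r (hs hr), fun r hr => h3 r (hs hr)⟩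
  have hDdown : ∀ δ, 0 ≤ δ → ∀ μ ∈ SD δ, ∀ μ' ≤ μ, μ' ∈ SD δ := by
    rintro δ hδ μ ⟨u, h1, h2, h3⟩ μ' hμ
    refine ⟨u, h1, h2, fun r hr => le_trans ?_ (h3 r hr)⟩
    have a := (h2 r hr).le
    have b : 0 ≤ r ^ (-γ) := rpow_nonneg (hδ.trans hr.1.le) _
    gcongr
  have hRic : ∀ δ, ∀ μ ∈ SD δ, ∃ q, Ric G γ μ δ q := by
    rintro δ μ ⟨u, h1, h2, h3⟩
    exact toRic hG h1 h2 h3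
  set K := max 0 (Lam * (128 + (2 * Lam * ((N : ℝ) - 1) / lam) ^ 2 / 2)) with hK
  have hDK : ∀ δ ≤ 1 / 2, ∀ μ ∈ SD δ, μ ≤ K := by
    intro δ hδ μ hμ
    rcases le_total μ 0 with h | h
    · exact h.trans (le_max_left _ _)
    · obtain ⟨q, hq⟩ := hRic _ _ (hDD _ _ hδ hμ)
      exact (hq.bound hG hγ0 h).trans (le_max_right _ _)
  have hDB : ∀ δ ≤ 1 / 2, BddAbove (SD δ) := fun δ hδ => ⟨K, fun μ hμ => hDK δ hδ μ hμ⟩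
  have hRB : BddAbove SR := (hDB 0 (by norm_num)).mono (hRD 0 le_rfl)
  have hz0 : ∀ r : ℝ, F (Dmat N (deriv (deriv (fun _ : ℝ => (1:ℝ))) r)
      (deriv (fun _ : ℝ => (1:ℝ)) r / r)) = 0 := by
    intro r
    have h := hG.z
    simpa using h
  have hR0 : (0:ℝ) ∈ SR := by
    refine ⟨fun _ => 1, contDiffOn_const, fun _ _ => one_pos, fun r hr => ?_⟩
    rw [hz0]; simp
  have hE0 : ∀ ε, (0:ℝ) ∈ SE ε := by
    intro ε
    refine ⟨fun _ => 1, continuousOn_const, contDiffOn_const, fun _ _ => one_pos, fun r hr => ?_⟩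
    rw [hz0]; simp
  -- comparison of the regularized problem with the annulus problem
  have hED : ∀ ε δ, 0 < ε → 0 < δ → ∀ μ ∈ SE ε, 0 ≤ μ →
      μ * (1 + ε ^ 2 / δ ^ 2) ^ (-(γ / 2)) ∈ SD δ := by
    rintro ε δ hε hδ μ ⟨u, h0, h1, h2, h3⟩ hμ
    have hs : Ioo δ 1 ⊆ Ioo 0 1 := Ioo_subset_Ioo_left hδ.le
    refine ⟨u, h1.mono hs, fun r hr => h2 r ⟨(hs hr).1.le, hr.2⟩, fun r hr => ?_⟩
    refine le_trans ?_ (h3 r (hs hr))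
    have hr0 : 0 < r := (hs hr).1
    have a := (h2 r ⟨(hs hr).1.le, hr.2⟩).le
    have e : (1 + ε ^ 2 / δ ^ 2) ^ (-(γ / 2)) * r ^ (-γ) ≤ (r ^ 2 + ε ^ 2) ^ (-(γ / 2)) := by
      have e1 : r ^ (-γ) = (r ^ 2) ^ (-(γ / 2)) := by
        rw [← rpow_natCast, ← rpow_mul hr0.le]; congr 1; push_cast; ring
      rw [e1, ← mul_rpow (by positivity) (by positivity)]
      apply rpow_le_rpow_of_nonpos (by positivity) _ (by linarith)
      have : ε ^ 2 = ε ^ 2 / δ ^ 2 * δ ^ 2 := by field_simp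
      have h5 : δ ^ 2 ≤ r ^ 2 := by have := hr.1; gcongr
      have h6 : ε ^ 2 / δ ^ 2 * δ ^ 2 ≤ ε ^ 2 / δ ^ 2 * r ^ 2 := by gcongr
      nlinarith
    have := mul_le_mul_of_nonneg_left e (mul_nonneg hμ a)
    linarith
  have hED' : ∀ ε δ, 0 < ε → 0 < δ → δ ≤ 1 / 2 → ∀ μ ∈ SE ε,
      μ ≤ sSup (SD δ) * (1 + ε ^ 2 / δ ^ 2) ^ (γ / 2) := by
    intro ε δ hε hδ hδ2 μ hμ
    have hb : 0 < 1 + ε ^ 2 / δ ^ 2 := by positivity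
    have hS0 : 0 ≤ sSup (SD δ) := le_csSup (hDB δ hδ2) (hRD δ hδ.le hR0)
    rcases le_total μ 0 with h | h
    · exact h.trans (mul_nonneg hS0 (by positivity))
    · have := le_csSup (hDB δ hδ2) (hED ε δ hε hδ μ hμ h)
      rw [rpow_neg hb.le, ← div_eq_mul_inv, div_le_iff₀ (by positivity)] at this
      exact this
  have hEB : ∀ ε, 0 < ε → BddAbove (SE ε) := fun ε hε =>
    ⟨_, fun μ hμ => hED' ε (1 / 2) hε (by norm_num) le_rfl μ hμ⟩
  have hR0' : 0 ≤ sSup SR := le_csSup hRB hR0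
  -- lower bounds
  have hloD : ∀ δ, 0 < δ → δ ≤ 1 / 2 → sSup SR ≤ sSup (SD δ) := fun δ h1 h2 =>
    csSup_le_csSup (hDB δ h2) ⟨0, hR0⟩ (hRD δ h1.le)
  have hloE : ∀ ε, 0 < ε → sSup SR ≤ sSup (SE ε) := by
    intro ε hε
    refine le_of_forall_lt fun μ' hμ' => ?_
    obtain ⟨μ2, h21, h22⟩ := exists_between hμ'
    refine lt_of_lt_of_le h21 ?_
    rcases le_or_gt μ2 0 with h | h
    · exact h.trans (le_csSup (hEB ε hε) (hE0 ε))
    · obtain ⟨μ, hμS, hμ⟩ := exists_lt_of_lt_csSup ⟨0, hR0⟩ h22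
      obtain ⟨u, u1, u2, u3, u4⟩ := key hG hγ0 hγ2 h hμ
        (fun δ hδ _ => hRic δ μ (hRD δ hδ.le hμS))
      refine le_csSup (hEB ε hε) ⟨u, u1, u2, u3, fun r hr => le_trans ?_ (u4 r hr)⟩
      have a := (u3 r ⟨hr.1.le, hr.2⟩).le
      have e : (r ^ 2 + ε ^ 2) ^ (-(γ / 2)) ≤ r ^ (-γ) := by
        have e1 : r ^ (-γ) = (r ^ 2) ^ (-(γ / 2)) := by
          rw [← rpow_natCast, ← rpow_mul hr.1.le]; congr 1; push_cast; ring
        rw [e1]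
        apply rpow_le_rpow_of_nonpos (pow_pos hr.1 2) _ (by linarith)
        nlinarith
      have := mul_le_mul_of_nonneg_left e (mul_nonneg h.le a)
      simp only [hGdef]
      linarith
  -- upper bound for the annuli
  have hupD : ∀ b, sSup SR < b → ∃ δ, 0 < δ ∧ δ ≤ 1 / 2 ∧ sSup (SD δ) < b := by
    intro b hb
    by_contra hcon
    push Not at hcon
    obtain ⟨μ', h1, h2⟩ := exists_between hb
    obtain ⟨μ, h3, h4⟩ := exists_between h2
    have hall : ∀ δ, 0 < δ → δ ≤ 1 / 2 → ∃ q, Ric G γ μ δ q := by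
      intro δ hδ hδ2
      obtain ⟨μ3, hm3, hlt⟩ := exists_lt_of_lt_csSup ⟨0, hRD δ hδ.le hR0⟩
        (h4.trans_le (hcon δ hδ hδ2))
      exact hRic δ μ (hDdown δ hδ.le μ3 hm3 μ hlt.le)
    obtain ⟨u, u1, u2, u3, u4⟩ := key hG hγ0 hγ2 (hR0'.trans_lt h1) h3 hall
    have : μ' ≤ sSup SR :=
      le_csSup hRB ⟨u, u2, fun r hr => u3 r ⟨hr.1.le, hr.2⟩, u4⟩
    linarith
  simp only [eR, eE, eD]
  constructor
  · rw [tendsto_order]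
    constructor
    · intro a ha
      filter_upwards [self_mem_nhdsWithin] with ε hε
      exact ha.trans_le (hloE ε hε)
    · intro b hb
      obtain ⟨δ, hδ, hδ2, hlt⟩ := hupD b hb
      have hct : ContinuousAt
          (fun ε : ℝ => sSup (SD δ) * (1 + ε ^ 2 / δ ^ 2) ^ (γ / 2)) 0 := by
        refine continuousAt_const.mul (ContinuousAt.rpow_const ?_ (Or.inr (by linarith)))
        fun_prop
      have h0 : sSup (SD δ) * (1 + (0:ℝ) ^ 2 / δ ^ 2) ^ (γ / 2) < b := by simpa using hlt
      have hev := (hct.eventually (gt_mem_nhds h0)).filter_mono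
        (nhdsWithin_le_nhds (s := Ioi 0))
      filter_upwards [self_mem_nhdsWithin, hev] with ε hε h
      exact (csSup_le ⟨0, hE0 ε⟩ (hED' ε δ hε hδ hδ2)).trans_lt h
  · rw [tendsto_order]
    have hmem : ∀ d : ℝ, 0 < d → ∀ᶠ δ in nhdsWithin (0:ℝ) (Ioo 0 1), δ < d := fun d hd =>
      (gt_mem_nhds hd).filter_mono nhdsWithin_le_nhds
    constructor
    · intro a ha
      filter_upwards [self_mem_nhdsWithin, hmem (1 / 2) (by norm_num)] with δ h1 h2
      exact ha.trans_le (hloD δ h1.1 h2.le)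
    · intro b hb
      obtain ⟨δ0, hδ, hδ2, hlt⟩ := hupD b hb
      filter_upwards [self_mem_nhdsWithin, hmem δ0 hδ] with δ h1 h2
      exact (csSup_le_csSup (hDB δ0 hδ2) ⟨0, hRD δ h1.1.le hR0⟩ (hDD δ δ0 h2.le)).trans_lt hlt

end
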